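/- Let Γ = (𝒱, ℰ) be a quantum hypergraph with d = dim 𝒱 ≥ 2 and suppose there is a probability distribution P₀ on ℰ with ∑_E P₀(E)·E positive definite. Set C = −log( max_P λ_min(∑_{E∈ℰ} P(E)·E) ), the maximum over probability distributions P on ℰ of the minimal eigenvalue. For n ≥ 1 let Γⁿ = (𝒱^{⊗n}, ℰⁿ) with ℰⁿ = {E₁ ⊗ ⋯ ⊗ Eₙ : Eᵢ ∈ ℰ}, let c(n) be the minimum cardinality of a covering of Γⁿ, and let c̃(n) be the minimum of ∑_{Eⁿ} v(Eⁿ) over all nonnegative weight functions v on ℰⁿ with ∑_{Eⁿ} v(Eⁿ)·Eⁿ ≥ 𝟙^{⊗n}. Then c̃(n) ≥ 2^{Cn}, c(n) ≤ 1 + 8·(ln 2 · log d)·n·2^{Cn}, and consequently (1/n)·log c(n) → C and (1/n)·log c̃(n) → C as n → ∞. -/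

import Mathlib

open scoped BigOperators
open ComplexOrder
open scoped Matrix

def IsProbDist {α : Type*} [Fintype α] (P : α → ℝ) : Prop :=
  (∀ a, 0 ≤ P a) ∧ ∑ a, P a = 1

/-- Minimal eigenvalue of a (Hermitian) matrix. -/
noncomputable def lamMin {m : Type*} [Fintype m] [DecidableEq m] (A : Matrix m m ℂ) : ℝ :=
  if h : A.IsHermitian then ⨅ i, h.eigenvalues i else 0

/-- n-fold tensor product of edges. -/
def tpow {d : ℕ} {ι : Type*} (Ed : ι → Matrix (Fin d) (Fin d) ℂ) (n : ℕ)
    (en : Fin n → ι) : Matrix (Fin n → Fin d) (Fin n → Fin d) ℂ :=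
  Matrix.of fun i j => ∏ k, Ed (en k) (i k) (j k)

/-!
By the minimax theorem there are a mixture `∑ P(E) E` with minimal eigenvalue `L` and a density
matrix `ρ` with `tr (ρ E) ≤ L` for all edges `E`. Such a saddle point survives tensor powers, with
`L` replaced by `Lⁿ`, so everything reduces to one hypergraph: pairing a fractional covering with
`ρ` bounds its weight below by `L⁻¹`, and the weights `P / L` attain this bound.

A covering is built greedily. For edges `E₁, …, Eₖ` put `Q = (1 - t Eₖ) ⋯ (1 - t E₁)`. The
inequality `E² ≤ E` makes `(2 - t) (1 - Q)† (1 - Q) ≤ t ∑ Eⱼ` telescope, so the edges cover as soon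
as `Q` is small. Averaging over `P`, each step can be chosen to shrink `tr Q† Q` by the factor
`1 - t (2 - t) L`, and after `O (L⁻¹ log dim)` steps `Q` is small enough.
-/

section StarOrderedAlgebra

variable {A : Type*} [Ring A] [StarRing A] [PartialOrder A] [StarOrderedRing A]

lemma mul_self_le_self {a : A} (h₀ : 0 ≤ a) (h₁ : a ≤ 1) : a * a ≤ a := by
  have ha : star a = a := (IsSelfAdjoint.of_nonneg h₀).star_eq
  have h := add_nonneg (star_left_conjugate_nonneg (sub_nonneg.2 h₁) a)
    (star_left_conjugate_nonneg h₀ (1 - a))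
  rw [← sub_nonneg]
  convert h using 1
  simp only [star_sub, star_one, ha]
  noncomm_ring

variable [Algebra ℝ A] [StarModule ℝ A]

lemma star_mul_self_one_sub_smul_le {a : A} (h₀ : 0 ≤ a) (h₁ : a ≤ 1) (t : ℝ) :
    star (1 - t • a) * (1 - t • a) ≤ 1 - (t * (2 - t)) • a := by
  have ha : star a = a := (IsSelfAdjoint.of_nonneg h₀).star_eq
  rw [← sub_nonneg]
  convert smul_nonneg (sq_nonneg t) (sub_nonneg.2 (mul_self_le_self h₀ h₁)) using 1
  simp only [star_sub, star_one, star_smul, ha, star_trivial, mul_sub, sub_mul, mul_one, one_mul,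
    smul_mul_assoc, mul_smul_comm, smul_smul, smul_sub]
  module

-- The difference of the two sides is
-- `t (1 - (2 - t) q)† a (1 - (2 - t) q) + t² (2 - t) q† (a - a²) q`.
lemma smul_star_mul_self_one_sub_mul_le {a q : A} (h₀ : 0 ≤ a) (h₁ : a ≤ 1) {t : ℝ}
    (ht₀ : 0 ≤ t) (ht₂ : t ≤ 2) :
    (2 - t) • (star (1 - (1 - t • a) * q) * (1 - (1 - t • a) * q)) ≤
      (2 - t) • (star (1 - q) * (1 - q)) + t • a := by
  have ha : star a = a := (IsSelfAdjoint.of_nonneg h₀).star_eq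
  have h₂ := add_nonneg
    (smul_nonneg ht₀ (star_left_conjugate_nonneg h₀ (1 - (2 - t) • q)))
    (smul_nonneg (mul_nonneg (sq_nonneg t) (sub_nonneg.2 ht₂))
      (star_left_conjugate_nonneg (sub_nonneg.2 (mul_self_le_self h₀ h₁)) q))
  rw [← sub_nonneg]
  convert h₂ using 1
  simp only [star_sub, star_one, star_mul, star_smul, ha, star_trivial, mul_sub, sub_mul, mul_one,
    one_mul, smul_mul_assoc, mul_smul_comm, smul_smul, smul_sub, mul_assoc]
  module

-- The difference of the two sides is `(1 - 4 q† q) + 2 (1 - 2 q)† (1 - 2 q)`.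
lemma one_le_four_smul_star_mul_self_one_sub {q : A} (h : star q * q ≤ (1 / 4 : ℝ) • 1) :
    1 ≤ (4 : ℝ) • (star (1 - q) * (1 - q)) := by
  have h₂ := add_nonneg (smul_nonneg (zero_le_four (α := ℝ)) (sub_nonneg.2 h))
    (smul_nonneg (zero_le_two (α := ℝ)) (star_mul_self_nonneg (1 - (2 : ℝ) • q)))
  rw [← sub_nonneg]
  convert h₂ using 1
  simp only [star_sub, star_one, star_smul, star_trivial, mul_sub, sub_mul, mul_one,
    one_mul, smul_mul_assoc, mul_smul_comm, smul_smul, smul_sub]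
  module

/-- The product of the factors `1 - t a` over `a ∈ l`, a noncommutative measure of what the effects
in `l` leave uncovered. -/
def dampedProd (t : ℝ) (l : List A) : A :=
  (l.map (1 - t • ·)).prod

lemma smul_star_mul_self_one_sub_dampedProd_le {t : ℝ} (ht₀ : 0 ≤ t) (ht₂ : t ≤ 2)
    {l : List A} (hl : ∀ a ∈ l, a ∈ Set.Icc 0 1) :
    (2 - t) • (star (1 - dampedProd t l) * (1 - dampedProd t l)) ≤ t • l.sum := by
  induction l with
  | nil => simp [dampedProd]
  | cons a l ih =>
    have ha := hl a List.mem_cons_self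
    have hstep := smul_star_mul_self_one_sub_mul_le (q := dampedProd t l) ha.1 ha.2 ht₀ ht₂
    rw [List.sum_cons, smul_add, add_comm]
    exact hstep.trans (add_le_add_left (ih fun b hb => hl b (List.mem_cons_of_mem _ hb)) _)

-- The choice `t = 2 / 5` makes `(2 - t) / t = 4`.
lemma one_le_sum_of_dampedProd_le {l : List A} (hl : ∀ a ∈ l, a ∈ Set.Icc 0 1)
    (h : star (dampedProd (2 / 5) l) * dampedProd (2 / 5) l ≤ (1 / 4 : ℝ) • 1) : 1 ≤ l.sum := by
  set Q := dampedProd (2 / 5) l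
  calc (1 : A) ≤ (4 : ℝ) • (star (1 - Q) * (1 - Q)) := one_le_four_smul_star_mul_self_one_sub h
    _ = (5 / 2 : ℝ) • (2 - 2 / 5 : ℝ) • (star (1 - Q) * (1 - Q)) := by rw [smul_smul]; norm_num
    _ ≤ (5 / 2 : ℝ) • (2 / 5 : ℝ) • l.sum := smul_le_smul_of_nonneg_left
        (smul_star_mul_self_one_sub_dampedProd_le (by norm_num) (by norm_num) hl) (by norm_num)
    _ = l.sum := by rw [smul_smul]; norm_num

end StarOrderedAlgebra

namespace IsProbDist

lemma exists_le_of_le_sum {κ : Type*} [Fintype κ] {P : κ → ℝ} (hP : IsProbDist P)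
    {a : κ → ℝ} {x : ℝ} (h : x ≤ ∑ i, P i * a i) : ∃ i, x ≤ a i := by
  by_contra! hlt
  exact h.not_gt ((convex_Iio x).sum_mem (fun i _ => hP.1 i) hP.2 fun i _ => hlt i)

lemma pi {κ : Type*} [Fintype κ] [DecidableEq κ] {ι : κ → Type*} [∀ k, Fintype (ι k)]
    {P : ∀ k, ι k → ℝ} (hP : ∀ k, IsProbDist (P k)) :
    IsProbDist fun f : ∀ k, ι k => ∏ k, P k (f k) := by
  refine ⟨fun f => Finset.prod_nonneg fun k _ => (hP k).1 (f k), ?_⟩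
  rw [← Fintype.piFinset_univ, ← Finset.prod_univ_sum]
  exact Finset.prod_eq_one fun k _ => (hP k).2

end IsProbDist

section LoewnerOrder

open scoped MatrixOrder
open Matrix

variable {m 𝕜 : Type*} [RCLike 𝕜]

lemma mem_Icc_zero_one_iff [DecidableEq m] {A : Matrix m m 𝕜} :
    A ∈ Set.Icc 0 1 ↔ A.PosSemidef ∧ (1 - A).PosSemidef := by
  rw [Set.mem_Icc, nonneg_iff_posSemidef, le_iff]

variable [Fintype m]

lemma trace_mul_nonneg {A B : Matrix m m 𝕜} (hA : 0 ≤ A) (hB : 0 ≤ B) : 0 ≤ (A * B).trace := by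
  classical
  obtain ⟨C, rfl⟩ := CStarAlgebra.nonneg_iff_eq_star_mul_self.1 hA
  rw [mul_assoc, trace_mul_comm]
  exact (star_right_conjugate_nonneg hB C).posSemidef.trace_nonneg

lemma trace_mul_mono_right {ρ A B : Matrix m m 𝕜} (hρ : 0 ≤ ρ) (hAB : A ≤ B) :
    (ρ * A).trace ≤ (ρ * B).trace := by
  rw [← sub_nonneg, ← trace_sub, ← mul_sub]
  exact trace_mul_nonneg hρ (sub_nonneg.2 hAB)

variable [DecidableEq m]

lemma smul_one_le_iff_le_eigenvalues {A : Matrix m m 𝕜} (hA : A.IsHermitian) {x : ℝ} :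
    x • 1 ≤ A ↔ ∀ i, x ≤ hA.eigenvalues i := by
  rw [← Algebra.algebraMap_eq_smul_one, algebraMap_le_iff_le_spectrum (ha := hA),
    hA.spectrum_real_eq_range_eigenvalues, Set.forall_mem_range]

lemma le_lamMin_iff [Nonempty m] {A : Matrix m m ℂ} (hA : A.IsHermitian) {x : ℝ} :
    x ≤ lamMin A ↔ x • 1 ≤ A := by
  rw [lamMin, dif_pos hA, le_ciInf_iff (Set.finite_range _).bddBelow,
    smul_one_le_iff_le_eigenvalues hA]

lemma le_trace_smul_one {A : Matrix m m ℂ} (hA : 0 ≤ A) : A ≤ A.trace.re • 1 := by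
  have hA' := hA.posSemidef
  rw [← Algebra.algebraMap_eq_smul_one, le_algebraMap_iff_spectrum_le (ha := hA'.isHermitian),
    hA'.isHermitian.spectrum_real_eq_range_eigenvalues, Set.forall_mem_range]
  intro i
  have h : A.trace.re = ∑ j, hA'.isHermitian.eigenvalues j := by
    simp [hA'.isHermitian.trace_eq_sum_eigenvalues]
  rw [h]
  exact Finset.single_le_sum (fun j _ => hA'.eigenvalues_nonneg j) (Finset.mem_univ i)

end LoewnerOrder

section DensityMatrices

open scoped MatrixOrder
open Matrix

/-- The states of a quantum system with orthonormal basis `m`: positive semidefinite matrices of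
trace one, the quantum counterpart of the standard simplex. -/
def densityMatrices (m : Type*) [Fintype m] : Set (Matrix m m ℂ) :=
  {ρ | 0 ≤ ρ ∧ ρ.trace = 1}

variable {m : Type*} [Fintype m]

lemma vecMulVec_star_mem_densityMatrices {v : m → ℂ} (hv : star v ⬝ᵥ v = 1) :
    vecMulVec v (star v) ∈ densityMatrices m :=
  ⟨(posSemidef_vecMulVec_self_star v).nonneg, by rw [trace_vecMulVec, dotProduct_comm, hv]⟩

lemma densityMatrices_nonempty [Nonempty m] : (densityMatrices m).Nonempty := by
  classical
  exact ⟨_, vecMulVec_star_mem_densityMatrices (v := Pi.single (Classical.arbitrary m) 1)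
    (by simp)⟩

lemma convex_densityMatrices : Convex ℝ (densityMatrices m) :=
  (convex_Ici (𝕜 := ℝ) (0 : Matrix m m ℂ)).inter
    ((convex_singleton (1 : ℂ)).linear_preimage (traceLinearMap m ℝ ℂ))

open scoped Matrix.Norms.L2Operator in
lemma isCompact_densityMatrices : IsCompact (densityMatrices m) := by
  classical
  have hclosed : IsClosed (densityMatrices m) :=
    isClosed_Ici.inter (isClosed_eq (Continuous.matrix_trace continuous_id) continuous_const)
  refine (isCompact_closedBall 0 1).of_isClosed_subset hclosed fun ρ hρ => ?_
  rw [mem_closedBall_zero_iff, CStarAlgebra.norm_le_one_iff_of_nonneg ρ hρ.1]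
  simpa [hρ.2] using le_trace_smul_one hρ.1

lemma smul_one_le_of_forall_le_trace [DecidableEq m] {A : Matrix m m ℂ} (hA : A.IsHermitian) {x : ℝ}
    (h : ∀ ρ ∈ densityMatrices m, x ≤ (ρ * A).trace.re) : x • 1 ≤ A := by
  refine (smul_one_le_iff_le_eigenvalues hA).2 fun i => ?_
  set v : m → ℂ := (hA.eigenvectorBasis i).ofLp
  have hv : star v ⬝ᵥ v = 1 := by
    have := hA.eigenvectorBasis.orthonormal.1 i
    rw [dotProduct_comm, ← EuclideanSpace.inner_eq_star_dotProduct]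
    simp
  rw [hA.eigenvalues_eq]
  convert h _ (vecMulVec_star_mem_densityMatrices hv) using 1
  rw [vecMulVec_mul, trace_vecMulVec, dotProduct_comm v, ← dotProduct_mulVec]
  rfl

end DensityMatrices

section GreedyCovering

open scoped MatrixOrder
open Matrix

variable {m : Type*} [Fintype m] [DecidableEq m]

lemma re_trace_star_mul_self_le {E Q : Matrix m m ℂ} (hE : E ∈ Set.Icc 0 1) (t : ℝ) :
    (star ((1 - t • E) * Q) * ((1 - t • E) * Q)).trace.re ≤
      (star Q * Q).trace.re - t * (2 - t) * (Q * star Q * E).trace.re := by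
  have hQ : 0 ≤ Q * star Q := mul_star_self_nonneg Q
  have h := (Complex.le_def.1
    (trace_mul_mono_right hQ (star_mul_self_one_sub_smul_le hE.1 hE.2 t))).1
  have h₁ : (star ((1 - t • E) * Q) * ((1 - t • E) * Q)).trace =
      (Q * star Q * (star (1 - t • E) * (1 - t • E))).trace := by
    rw [star_mul, mul_assoc Q, trace_mul_comm Q]
    simp only [mul_assoc]
  rw [h₁, trace_mul_comm (star Q)]
  simpa [mul_sub, trace_sub] using h

variable {κ : Type*} [Fintype κ]

lemma exists_mul_trace_le {F : κ → Matrix m m ℂ} {P : κ → ℝ} (hP : IsProbDist P) {μ : ℝ}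
    (hμ : μ • 1 ≤ ∑ i, P i • F i) {ρ : Matrix m m ℂ} (hρ : 0 ≤ ρ) :
    ∃ i, μ * ρ.trace.re ≤ (ρ * F i).trace.re := by
  refine hP.exists_le_of_le_sum ?_
  have h := (Complex.le_def.1 (trace_mul_mono_right hρ hμ)).1
  simpa [Finset.mul_sum, trace_sum] using h

lemma exists_dampedProd_trace_le {F : κ → Matrix m m ℂ} (hF : ∀ i, F i ∈ Set.Icc 0 1)
    {P : κ → ℝ} (hP : IsProbDist P) {μ : ℝ} (hμ : μ • 1 ≤ ∑ i, P i • F i)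
    {t : ℝ} (ht₀ : 0 ≤ t) (ht₂ : t ≤ 2) (hμ₁ : t * (2 - t) * μ ≤ 1) (k : ℕ) :
    ∃ s : Fin k → κ,
      let Q := dampedProd t (List.ofFn fun j => F (s j))
      (star Q * Q).trace.re ≤ Fintype.card m * (1 - t * (2 - t) * μ) ^ k := by
  induction k with
  | zero => exact ⟨Fin.elim0, by simp [dampedProd]⟩
  | succ k ih =>
    obtain ⟨s, hs⟩ := ih
    set Q := dampedProd t (List.ofFn fun j => F (s j))
    obtain ⟨i, hi⟩ := exists_mul_trace_le hP hμ (mul_star_self_nonneg Q)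
    refine ⟨Fin.cons i s, ?_⟩
    have hcons : dampedProd t (List.ofFn fun j => F (Fin.cons (α := fun _ => κ) i s j)) =
        (1 - t • F i) * Q := by
      simp [dampedProd, Q, List.ofFn_succ]
    rw [hcons]
    rw [trace_mul_comm] at hi
    calc _ ≤ (star Q * Q).trace.re - t * (2 - t) * (Q * star Q * F i).trace.re :=
          re_trace_star_mul_self_le (hF i) t
      _ ≤ (star Q * Q).trace.re - t * (2 - t) * (μ * (star Q * Q).trace.re) := by
          have := mul_nonneg ht₀ (sub_nonneg.2 ht₂)
          gcongr
      _ = (1 - t * (2 - t) * μ) * (star Q * Q).trace.re := by ring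
      _ ≤ (1 - t * (2 - t) * μ) * (Fintype.card m * (1 - t * (2 - t) * μ) ^ k) :=
          mul_le_mul_of_nonneg_left hs (sub_nonneg.2 hμ₁)
      _ = _ := by ring

lemma exists_covering {F : κ → Matrix m m ℂ} (hF : ∀ i, F i ∈ Set.Icc 0 1)
    {P : κ → ℝ} (hP : IsProbDist P) {μ : ℝ} (hμ₁ : μ ≤ 1) (hμ : μ • 1 ≤ ∑ i, P i • F i) {k : ℕ}
    (hk : Fintype.card m * (1 - 16 / 25 * μ) ^ k ≤ 1 / 4) :
    ∃ s : Fin k → κ, 1 ≤ ∑ j, F (s j) := by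
  have hrate : (2 / 5 * (2 - 2 / 5) : ℝ) = 16 / 25 := by norm_num
  obtain ⟨s, hs⟩ := exists_dampedProd_trace_le hF hP hμ (t := 2 / 5) (by norm_num) (by norm_num)
    (by linarith) k
  rw [hrate] at hs
  refine ⟨s, ?_⟩
  set Q := dampedProd (2 / 5) (List.ofFn fun j => F (s j))
  have hQ : star Q * Q ≤ (1 / 4 : ℝ) • 1 := by
    refine (le_trace_smul_one (star_mul_self_nonneg Q)).trans ?_
    exact smul_le_smul_of_nonneg_right (hs.trans hk) zero_le_one
  rw [← List.sum_ofFn]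
  exact one_le_sum_of_dampedProd_le (List.forall_mem_ofFn_iff.2 fun j => hF (s j)) hQ

end GreedyCovering

section PiKronecker

open Matrix

variable {κ R : Type*} [Fintype κ]

/-- The tensor (Kronecker) product of a finite family of matrices, with rows and columns indexed by
families of indices. -/
def piKronecker [CommMonoid R] {l m : κ → Type*} (A : ∀ k, Matrix (l k) (m k) R) :
    Matrix (∀ k, l k) (∀ k, m k) R :=
  of fun i j => ∏ k, A k (i k) (j k)

variable {l m p : κ → Type*}

lemma piKronecker_one [CommMonoidWithZero R] [∀ k, DecidableEq (m k)] :
    piKronecker (fun k => (1 : Matrix (m k) (m k) R)) = 1 := by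
  ext i j
  simp [piKronecker, one_apply, Finset.prod_ite_zero, funext_iff]

lemma piKronecker_smul {S : Type*} [CommMonoid R] [CommMonoid S] [MulAction S R]
    [IsScalarTower S R R] [SMulCommClass S R R] (c : κ → S) (A : ∀ k, Matrix (l k) (m k) R) :
    piKronecker (fun k => c k • A k) = (∏ k, c k) • piKronecker A := by
  ext i j
  exact Finset.prod_smul _ _ _

lemma conjTranspose_piKronecker [CommSemiring R] [StarRing R] (A : ∀ k, Matrix (l k) (m k) R) :
    (piKronecker A)ᴴ = piKronecker fun k => (A k)ᴴ := by
  ext i j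
  simp [piKronecker]

section CommSemiring

variable [CommSemiring R] [DecidableEq κ]

lemma piKronecker_mul [∀ k, Fintype (m k)] (A : ∀ k, Matrix (l k) (m k) R)
    (B : ∀ k, Matrix (m k) (p k) R) :
    piKronecker A * piKronecker B = piKronecker fun k => A k * B k := by
  ext i j
  simp only [piKronecker, mul_apply, of_apply, Finset.prod_univ_sum, Fintype.piFinset_univ,
    Finset.prod_mul_distrib]

lemma trace_piKronecker [∀ k, Fintype (m k)] (A : ∀ k, Matrix (m k) (m k) R) :
    (piKronecker A).trace = ∏ k, (A k).trace := by
  simp only [trace, diag, piKronecker, of_apply, Finset.prod_univ_sum, Fintype.piFinset_univ]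

lemma piKronecker_sum {ι : κ → Type*} [∀ k, Fintype (ι k)] (A : ∀ k, ι k → Matrix (l k) (m k) R) :
    piKronecker (fun k => ∑ i, A k i) = ∑ f : ∀ k, ι k, piKronecker fun k => A k (f k) := by
  ext i j
  simp only [piKronecker, Matrix.sum_apply, of_apply, Finset.prod_univ_sum, Fintype.piFinset_univ]

end CommSemiring

open scoped MatrixOrder

variable {𝕜 : Type*} [RCLike 𝕜] [∀ k, Finite (m k)]

lemma piKronecker_nonneg {A : ∀ k, Matrix (m k) (m k) 𝕜} (hA : ∀ k, 0 ≤ A k) :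
    0 ≤ piKronecker A := by
  classical
  have (k : κ) := Fintype.ofFinite (m k)
  choose B hB using fun k => CStarAlgebra.nonneg_iff_eq_star_mul_self.1 (hA k)
  obtain rfl : A = fun k => star (B k) * B k := funext hB
  simp only [star_eq_conjTranspose, ← piKronecker_mul, ← conjTranspose_piKronecker]
  exact star_mul_self_nonneg (piKronecker B)

lemma piKronecker_mono {A B : ∀ k, Matrix (m k) (m k) 𝕜} (hA : ∀ k, 0 ≤ A k)
    (hAB : ∀ k, A k ≤ B k) : piKronecker A ≤ piKronecker B := by
  classical
  let D (k : κ) (b : Bool) : Matrix (m k) (m k) 𝕜 := cond b (A k) (B k - A k)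
  have hD (k b) : 0 ≤ D k b := by
    cases b
    exacts [sub_nonneg.2 (hAB k), hA k]
  calc piKronecker A = piKronecker fun k => D k true := rfl
    _ ≤ ∑ f : κ → Bool, piKronecker fun k => D k (f k) :=
      Finset.single_le_sum (f := fun f : κ → Bool => piKronecker fun k => D k (f k))
        (fun f _ => piKronecker_nonneg fun k => hD k (f k)) (Finset.mem_univ fun _ => true)
    _ = piKronecker fun k => ∑ b, D k b := (piKronecker_sum D).symm
    _ = piKronecker B := by simp [D]

end PiKronecker

section SaddlePoint

open scoped MatrixOrder
open Matrix

variable {m ι : Type*} [Fintype m] [DecidableEq m] [Fintype ι]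

/-- An equilibrium of value `L` of the zero-sum game in which one player picks an edge `F i`, the
other a density matrix `ρ`, and the first is paid `tr (ρ F i)`: `P` guarantees at least `L` and `ρ`
at most `L`. The inequality for `ρ` is stated in the order of `ℂ`, so that it can be multiplied over
tensor factors. -/
structure IsSaddlePoint (F : ι → Matrix m m ℂ) (P : ι → ℝ) (ρ : Matrix m m ℂ) (L : ℝ) : Prop where
  isProbDist : IsProbDist P
  mem_densityMatrices : ρ ∈ densityMatrices m
  smul_one_le_sum : L • 1 ≤ ∑ i, P i • F i
  trace_mul_le (i : ι) : (ρ * F i).trace ≤ L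

lemma exists_isSaddlePoint [Nonempty m] [Nonempty ι] {F : ι → Matrix m m ℂ} (hF : ∀ i, 0 ≤ F i) :
    ∃ P ρ L, IsSaddlePoint F P ρ L := by
  classical
  let payoff : Matrix m m ℂ →ₗ[ℝ] (ι → ℝ) →ₗ[ℝ] ℝ :=
    LinearMap.mk₂ ℝ (fun ρ P => (ρ * ∑ i, P i • F i).trace.re)
      (fun ρ σ P => by simp [add_mul]) (fun c ρ P => by simp)
      (fun ρ P Q => by simp [add_smul, Finset.sum_add_distrib, mul_add])
      (fun c ρ P => by simp [mul_smul, ← Finset.smul_sum])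
  obtain ⟨ρ, hρ, P, hP, hsaddle⟩ := Sion.exists_isSaddlePointOn (f := fun ρ P => payoff ρ P)
    densityMatrices_nonempty convex_densityMatrices isCompact_densityMatrices
    (fun P _ => (LinearMap.continuous_of_finiteDimensional
      (payoff.flip P)).lowerSemicontinuous.lowerSemicontinuousOn _)
    (fun P _ => ((payoff.flip P).convexOn convex_densityMatrices).quasiconvexOn)
    (convex_stdSimplex ℝ ι) ⟨_, single_mem_stdSimplex ℝ (Classical.arbitrary ι)⟩
    (isCompact_stdSimplex ℝ ι)
    (fun ρ _ => (LinearMap.continuous_of_finiteDimensional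
      (payoff ρ)).upperSemicontinuous.upperSemicontinuousOn _)
    (fun ρ _ => ((payoff ρ).concaveOn (convex_stdSimplex ℝ ι)).quasiconcaveOn)
  refine ⟨P, ρ, payoff ρ P, hP, hρ, smul_one_le_of_forall_le_trace ?_ fun σ hσ => hsaddle σ hσ P hP,
    fun i => ?_⟩
  · exact (Finset.sum_nonneg fun i _ => smul_nonneg (hP.1 i) (hF i)).posSemidef.isHermitian
  · have h := hsaddle ρ hρ _ (single_mem_stdSimplex ℝ i)
    have him := (Complex.le_def.1 (trace_mul_nonneg hρ.1 (hF i))).2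
    refine Complex.le_def.2 ⟨?_, him.symm⟩
    simpa [payoff, Pi.single_apply, ite_smul] using h

namespace IsSaddlePoint

variable {F : ι → Matrix m m ℂ} {P : ι → ℝ} {ρ : Matrix m m ℂ} {L : ℝ}

lemma re_trace_mul_sum_le (h : IsSaddlePoint F P ρ L) {β : Type*} [Fintype β] (s : β → ι)
    {w : β → ℝ} (hw : ∀ b, 0 ≤ w b) :
    (ρ * ∑ b, w b • F (s b)).trace.re ≤ L * ∑ b, w b := by
  simp only [Finset.mul_sum, mul_smul_comm, trace_sum, trace_smul, Complex.re_sum, Complex.smul_re,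
    smul_eq_mul]
  refine Finset.sum_le_sum fun b _ => ?_
  rw [mul_comm]
  exact mul_le_mul_of_nonneg_right (Complex.le_def.1 (h.trace_mul_le (s b))).1 (hw b)

lemma le_mul_sum_of_smul_one_le (h : IsSaddlePoint F P ρ L) {β : Type*} [Fintype β] (s : β → ι)
    {w : β → ℝ} (hw : ∀ b, 0 ≤ w b) {x : ℝ} (hx : x • 1 ≤ ∑ b, w b • F (s b)) :
    x ≤ L * ∑ b, w b := by
  refine le_trans ?_ (h.re_trace_mul_sum_le s hw)
  have hmono := (Complex.le_def.1 (trace_mul_mono_right h.mem_densityMatrices.1 hx)).1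
  simpa [h.mem_densityMatrices.2] using hmono

lemma le_one (h : IsSaddlePoint F P ρ L) (hF : ∀ i, F i ≤ 1) : L ≤ 1 := by
  have hle : ∑ i, P i • F i ≤ 1 :=
    calc ∑ i, P i • F i ≤ ∑ i, P i • (1 : Matrix m m ℂ) :=
          Finset.sum_le_sum fun i _ => smul_le_smul_of_nonneg_left (hF i) (h.isProbDist.1 i)
      _ = 1 := by rw [← Finset.sum_smul, h.isProbDist.2, one_smul]
  have hmono := (Complex.le_def.1 (trace_mul_mono_right h.mem_densityMatrices.1
    (h.smul_one_le_sum.trans hle))).1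
  simpa [h.mem_densityMatrices.2] using hmono

lemma isGreatest_lamMin [Nonempty m] (h : IsSaddlePoint F P ρ L) (hF : ∀ i, (F i).IsHermitian) :
    IsGreatest {x | ∃ P' : ι → ℝ, IsProbDist P' ∧ x = lamMin (∑ i, P' i • F i)} L := by
  have hherm (P' : ι → ℝ) : (∑ i, P' i • F i).IsHermitian :=
    isSelfAdjoint_sum _ fun i _ => (IsSelfAdjoint.all (P' i)).smul (hF i)
  have hle {P' : ι → ℝ} (hP' : IsProbDist P') : lamMin (∑ i, P' i • F i) ≤ L := by
    simpa [hP'.2] using h.le_mul_sum_of_smul_one_le id hP'.1 ((le_lamMin_iff (hherm P')).1 le_rfl)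
  refine ⟨⟨P, h.isProbDist, ?_⟩, ?_⟩
  · exact ((le_lamMin_iff (hherm P)).2 h.smul_one_le_sum).antisymm (hle h.isProbDist)
  · rintro _ ⟨P', hP', rfl⟩
    exact hle hP'

lemma pos [Nonempty m] (h : IsSaddlePoint F P ρ L) {P₀ : ι → ℝ} (hP₀ : ∀ i, 0 ≤ P₀ i)
    (hpos : (∑ i, P₀ i • F i).PosDef) : 0 < L := by
  obtain ⟨x, hx₀, hx⟩ := (CFC.exists_pos_algebraMap_le_iff hpos.isHermitian).2
    fun _ hy => hpos.isStrictlyPositive.spectrum_pos hy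
  rw [Algebra.algebraMap_eq_smul_one] at hx
  exact pos_of_mul_pos_left (hx₀.trans_le (h.le_mul_sum_of_smul_one_le id hP₀ hx))
    (Finset.sum_nonneg fun i _ => hP₀ i)

end IsSaddlePoint

end SaddlePoint

section CoveringNumber

open scoped MatrixOrder
open Matrix

section Defs

variable {m ι : Type*} [DecidableEq m]

/-- The minimum cardinality of a covering of the quantum hypergraph with edges `F i`, repetitions
allowed; it is the junk value `0` if there is no covering. -/
noncomputable def coveringNumber (F : ι → Matrix m m ℂ) : ℕ :=
  sInf {k | ∃ s : Fin k → ι, 1 ≤ ∑ j, F (s j)}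

/-- The minimum total weight of a fractional covering of the quantum hypergraph with edges `F i`; it
is the junk value `0` if there is no fractional covering. -/
noncomputable def fractionalCoveringNumber [Fintype ι] (F : ι → Matrix m m ℂ) : ℝ :=
  sInf {x | ∃ v : ι → ℝ, (∀ i, 0 ≤ v i) ∧ 1 ≤ ∑ i, v i • F i ∧ x = ∑ i, v i}

end Defs

namespace IsSaddlePoint

variable {m ι : Type*} [Fintype m] [DecidableEq m] [Fintype ι]
  {F : ι → Matrix m m ℂ} {P : ι → ℝ} {ρ : Matrix m m ℂ} {L : ℝ}

lemma inv_le_sum_of_one_le (h : IsSaddlePoint F P ρ L) (hL : 0 < L) {β : Type*} [Fintype β]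
    (s : β → ι) {w : β → ℝ} (hw : ∀ b, 0 ≤ w b) (hcov : 1 ≤ ∑ b, w b • F (s b)) :
    L⁻¹ ≤ ∑ b, w b := by
  rw [inv_le_iff_one_le_mul₀' hL]
  exact h.le_mul_sum_of_smul_one_le s hw (by rwa [one_smul])

lemma fractionalCoveringNumber_eq (h : IsSaddlePoint F P ρ L) (hL : 0 < L) :
    fractionalCoveringNumber F = L⁻¹ := by
  have hleast : IsLeast {x | ∃ v : ι → ℝ, (∀ i, 0 ≤ v i) ∧ 1 ≤ ∑ i, v i • F i ∧ x = ∑ i, v i}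
      L⁻¹ := by
    refine ⟨⟨fun i => L⁻¹ * P i, fun i => mul_nonneg (inv_nonneg.2 hL.le) (h.isProbDist.1 i),
      ?_, ?_⟩, ?_⟩
    · calc 1 = L⁻¹ • L • (1 : Matrix m m ℂ) := by rw [inv_smul_smul₀ hL.ne']
        _ ≤ L⁻¹ • ∑ i, P i • F i :=
          smul_le_smul_of_nonneg_left h.smul_one_le_sum (inv_nonneg.2 hL.le)
        _ = ∑ i, (L⁻¹ * P i) • F i := by simp only [Finset.smul_sum, mul_smul]
    · rw [← Finset.mul_sum, h.isProbDist.2, mul_one]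
    · rintro _ ⟨v, hv, hcov, rfl⟩
      exact h.inv_le_sum_of_one_le hL id hv hcov
  exact hleast.csInf_eq

lemma exists_covering_ceil [Nonempty m] (h : IsSaddlePoint F P ρ L) (hL : 0 < L)
    (hF : ∀ i, F i ∈ Set.Icc 0 1) :
    ∃ s : Fin ⌈25 / 16 * L⁻¹ * Real.log (4 * Fintype.card m)⌉₊ → ι, 1 ≤ ∑ j, F (s j) := by
  have hL₁ := h.le_one fun i => (hF i).2
  refine exists_covering hF h.isProbDist hL₁ h.smul_one_le_sum ?_
  set D : ℝ := (Fintype.card m : ℝ)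
  have hD : 0 < D := Nat.cast_pos.2 Fintype.card_pos
  set k := ⌈25 / 16 * L⁻¹ * Real.log (4 * D)⌉₊
  have hk : Real.log (4 * D) ≤ 16 / 25 * L * k := by
    have := Nat.le_ceil (25 / 16 * L⁻¹ * Real.log (4 * D))
    calc Real.log (4 * D) = 16 / 25 * L * (25 / 16 * L⁻¹ * Real.log (4 * D)) := by field_simp
      _ ≤ 16 / 25 * L * k := by gcongr
  calc D * (1 - 16 / 25 * L) ^ k ≤ D * Real.exp (-(16 / 25 * L)) ^ k := by
        gcongr
        · linarith
        · exact Real.one_sub_le_exp_neg _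
    _ = D * Real.exp (-(16 / 25 * L * k)) := by rw [← Real.exp_nat_mul]; ring_nf
    _ ≤ D * Real.exp (-Real.log (4 * D)) := by gcongr
    _ = 1 / 4 := by rw [Real.exp_neg, Real.exp_log (by positivity)]; field_simp

lemma coveringNumber_le [Nonempty m] (h : IsSaddlePoint F P ρ L) (hL : 0 < L)
    (hF : ∀ i, F i ∈ Set.Icc 0 1) :
    coveringNumber F ≤ 1 + 25 / 16 * L⁻¹ * Real.log (4 * Fintype.card m) := by
  have hcard : (1 : ℝ) ≤ Fintype.card m := Nat.one_le_cast.2 Fintype.card_pos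
  have hlog : 0 ≤ Real.log (4 * Fintype.card m) := Real.log_nonneg (by linarith)
  calc (coveringNumber F : ℝ) ≤ ⌈25 / 16 * L⁻¹ * Real.log (4 * Fintype.card m)⌉₊ :=
        Nat.cast_le.2 (Nat.sInf_le (h.exists_covering_ceil hL hF))
    _ ≤ 1 + 25 / 16 * L⁻¹ * Real.log (4 * Fintype.card m) := by
        rw [add_comm]
        exact (Nat.ceil_lt_add_one (by positivity)).le

lemma inv_le_coveringNumber [Nonempty m] (h : IsSaddlePoint F P ρ L) (hL : 0 < L)
    (hF : ∀ i, F i ∈ Set.Icc 0 1) : L⁻¹ ≤ coveringNumber F := by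
  obtain ⟨s, hs⟩ : coveringNumber F ∈ {k | ∃ s : Fin k → ι, 1 ≤ ∑ j, F (s j)} :=
    Nat.sInf_mem ⟨_, h.exists_covering_ceil hL hF⟩
  simpa using h.inv_le_sum_of_one_le hL s (w := fun _ => 1) (fun _ => zero_le_one)
    (by simpa using hs)

end IsSaddlePoint

end CoveringNumber

section TensorPower

open scoped MatrixOrder
open Matrix

lemma IsSaddlePoint.pi {κ : Type*} [Fintype κ] [DecidableEq κ] {ι m : κ → Type*}
    [∀ k, Fintype (ι k)] [∀ k, Fintype (m k)] [∀ k, DecidableEq (m k)]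
    {F : ∀ k, ι k → Matrix (m k) (m k) ℂ} {P : ∀ k, ι k → ℝ} {ρ : ∀ k, Matrix (m k) (m k) ℂ}
    {L : κ → ℝ} (h : ∀ k, IsSaddlePoint (F k) (P k) (ρ k) (L k)) (hF : ∀ k i, 0 ≤ F k i)
    (hL : ∀ k, 0 ≤ L k) :
    IsSaddlePoint (fun f : ∀ k, ι k => piKronecker fun k => F k (f k))
      (fun f => ∏ k, P k (f k)) (piKronecker ρ) (∏ k, L k) where
  isProbDist := .pi fun k => (h k).isProbDist
  mem_densityMatrices := by
    refine ⟨piKronecker_nonneg fun k => (h k).mem_densityMatrices.1, ?_⟩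
    rw [trace_piKronecker]
    exact Finset.prod_eq_one fun k _ => (h k).mem_densityMatrices.2
  smul_one_le_sum := by
    simp only [← piKronecker_smul, ← piKronecker_sum fun k i => P k i • F k i, ← piKronecker_one]
    exact piKronecker_mono (fun k => smul_nonneg (hL k) zero_le_one) fun k =>
      (h k).smul_one_le_sum
  trace_mul_le f := by
    rw [piKronecker_mul, trace_piKronecker, Complex.ofReal_prod]
    exact Finset.prod_le_prod
      (fun k _ => trace_mul_nonneg (h k).mem_densityMatrices.1 (hF k (f k)))
      fun k _ => (h k).trace_mul_le (f k)

variable {d : ℕ} {ι : Type*} {Ed : ι → Matrix (Fin d) (Fin d) ℂ}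

lemma tpow_mem_Icc (hE : ∀ i, Ed i ∈ Set.Icc 0 1) (n : ℕ) (en : Fin n → ι) :
    tpow Ed n en ∈ Set.Icc 0 1 := by
  refine ⟨piKronecker_nonneg fun k => (hE (en k)).1, ?_⟩
  rw [← piKronecker_one]
  exact piKronecker_mono (fun k => (hE (en k)).1) fun k => (hE (en k)).2

variable [Fintype ι] {P : ι → ℝ} {ρ : Matrix (Fin d) (Fin d) ℂ} {L : ℝ}

namespace IsSaddlePoint

lemma tensorPower (h : IsSaddlePoint Ed P ρ L) (hE : ∀ i, 0 ≤ Ed i) (hL : 0 ≤ L) (n : ℕ) :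
    IsSaddlePoint (tpow Ed n) (fun en => ∏ k, P (en k)) (piKronecker fun _ => ρ) (L ^ n) := by
  rw [show tpow Ed n = fun en => piKronecker fun k => Ed (en k) from rfl, ← Fin.prod_const]
  exact .pi (fun _ => h) (fun _ => hE) fun _ => hL

lemma fractionalCoveringNumber_tpow (h : IsSaddlePoint Ed P ρ L) (hE : ∀ i, 0 ≤ Ed i)
    (hL : 0 < L) (n : ℕ) : fractionalCoveringNumber (tpow Ed n) = L⁻¹ ^ n := by
  rw [(h.tensorPower hE hL.le n).fractionalCoveringNumber_eq (pow_pos hL n), inv_pow]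

lemma inv_pow_le_coveringNumber_tpow [NeZero d] (h : IsSaddlePoint Ed P ρ L)
    (hE : ∀ i, Ed i ∈ Set.Icc 0 1) (hL : 0 < L) (n : ℕ) :
    L⁻¹ ^ n ≤ coveringNumber (tpow Ed n) := by
  rw [inv_pow]
  exact (h.tensorPower (fun i => (hE i).1) hL.le n).inv_le_coveringNumber (pow_pos hL n)
    (tpow_mem_Icc hE n)

lemma coveringNumber_tpow_le (h : IsSaddlePoint Ed P ρ L) (hE : ∀ i, Ed i ∈ Set.Icc 0 1)
    (hL : 0 < L) (hd : 2 ≤ d) {n : ℕ} (hn : 1 ≤ n) :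
    coveringNumber (tpow Ed n) ≤ 1 + 8 * Real.log d * n * L⁻¹ ^ n := by
  have : NeZero d := ⟨by omega⟩
  have hd' : (2 : ℝ) ≤ d := Nat.ofNat_le_cast.2 hd
  have hlog : Real.log (4 * d ^ n) ≤ 3 * (n * Real.log d) := by
    calc Real.log (4 * d ^ n) ≤ Real.log ((d ^ n) ^ 2 * d ^ n) := by
          have : (2 : ℝ) ≤ d ^ n := hd'.trans (le_self_pow₀ (by linarith) (by omega))
          gcongr
          nlinarith
      _ = 3 * (n * Real.log d) := by
          rw [← pow_succ, Real.log_pow, Real.log_pow]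
          norm_num
  have : 0 ≤ Real.log d := Real.log_nonneg (by linarith)
  have h' := (h.tensorPower (fun i => (hE i).1) hL.le n).coveringNumber_le (pow_pos hL n)
    (tpow_mem_Icc hE n)
  simp only [Fintype.card_pi, Fintype.card_fin, Finset.prod_const, Finset.card_univ, Nat.cast_pow,
    ← inv_pow] at h'
  calc (coveringNumber (tpow Ed n) : ℝ) ≤ 1 + 25 / 16 * L⁻¹ ^ n * Real.log (4 * d ^ n) := h'
    _ ≤ 1 + 25 / 16 * L⁻¹ ^ n * (3 * (n * Real.log d)) := by gcongr
    _ = 1 + 75 / 16 * (Real.log d * n * L⁻¹ ^ n) := by ring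
    _ ≤ 1 + 8 * (Real.log d * n * L⁻¹ ^ n) := by gcongr; norm_num
    _ = 1 + 8 * Real.log d * n * L⁻¹ ^ n := by ring

end IsSaddlePoint

end TensorPower

section Asymptotics

open Filter Topology

lemma tendsto_inv_mul_logb_natCast {b : ℝ} :
    Tendsto (fun n : ℕ => (n : ℝ)⁻¹ * Real.logb b n) atTop (𝓝 0) := by
  have h := (Real.isLittleO_log_id_atTop.tendsto_div_nhds_zero.comp
    tendsto_natCast_atTop_atTop).div_const (Real.log b)
  rw [zero_div] at h
  refine h.congr fun n => ?_
  simp only [Function.comp_apply, id, Real.logb]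
  ring

lemma tendsto_inv_mul_logb {b r K : ℝ} (hb : 1 < b) (hr : 1 ≤ r) (hK : 0 ≤ K) {a : ℕ → ℝ}
    (hlower : ∀ n, r ^ n ≤ a n) (hupper : ∀ n, 1 ≤ n → a n ≤ 1 + K * n * r ^ n) :
    Tendsto (fun n : ℕ => (n : ℝ)⁻¹ * Real.logb b (a n)) atTop (𝓝 (Real.logb b r)) := by
  have hbound : Tendsto (fun n : ℕ => (n : ℝ)⁻¹ * Real.logb b (1 + K) +
      (n : ℝ)⁻¹ * Real.logb b n + Real.logb b r) atTop (𝓝 (Real.logb b r)) := by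
    simpa using ((tendsto_inv_atTop_nhds_zero_nat.mul_const (Real.logb b (1 + K))).add
      tendsto_inv_mul_logb_natCast).add_const (Real.logb b r)
  have hr₀ (n : ℕ) : 0 < r ^ n := pow_pos (zero_lt_one.trans_le hr) n
  refine tendsto_of_tendsto_of_tendsto_of_le_of_le' tendsto_const_nhds hbound ?_ ?_ <;>
    filter_upwards [eventually_ge_atTop 1] with n hn
  · calc Real.logb b r = (n : ℝ)⁻¹ * Real.logb b (r ^ n) := by
          rw [Real.logb_pow, inv_mul_cancel_left₀ (by positivity)]
      _ ≤ (n : ℝ)⁻¹ * Real.logb b (a n) := by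
          have := hr₀ n
          gcongr
          exact hlower n
  · have ha : a n ≤ (1 + K) * n * r ^ n := by
      have : 1 ≤ n * r ^ n := one_le_mul_of_one_le_of_one_le (Nat.one_le_cast.2 hn) (one_le_pow₀ hr)
      linarith [hupper n hn]
    calc (n : ℝ)⁻¹ * Real.logb b (a n) ≤ (n : ℝ)⁻¹ * Real.logb b ((1 + K) * n * r ^ n) := by
          have := (hr₀ n).trans_le (hlower n)
          gcongr
      _ = (n : ℝ)⁻¹ * Real.logb b (1 + K) + (n : ℝ)⁻¹ * Real.logb b n + Real.logb b r := by
          rw [Real.logb_mul (by positivity) (hr₀ n).ne',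
            Real.logb_mul (by positivity) (by positivity), Real.logb_pow]
          field_simp

end Asymptotics

theorem stmt19 {d : ℕ} (hd : 2 ≤ d) {ι : Type*} [Fintype ι] [Nonempty ι]
    (Ed : ι → Matrix (Fin d) (Fin d) ℂ)
    (hE : ∀ i, (Ed i).PosSemidef ∧ (1 - Ed i).PosSemidef)
    (P₀ : ι → ℝ) (hP₀ : IsProbDist P₀) (hpos : (∑ i, (P₀ i : ℂ) • Ed i).PosDef)
    (C : ℝ)
    (hC : C = - Real.logb 2 (sSup {x | ∃ P : ι → ℝ, IsProbDist P ∧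
        x = lamMin (∑ i, (P i : ℂ) • Ed i)}))
    (c : ℕ → ℕ)
    (hc : ∀ n, c n = sInf {k : ℕ | ∃ sel : Fin k → (Fin n → ι),
        ((∑ j, tpow Ed n (sel j)) - 1).PosSemidef})
    (ct : ℕ → ℝ)
    (hct : ∀ n, ct n = sInf {s : ℝ | ∃ v : (Fin n → ι) → ℝ,
        (∀ en, 0 ≤ v en) ∧
        ((∑ en, (v en : ℂ) • tpow Ed n en) - 1).PosSemidef ∧
        s = ∑ en, v en}) :
    (∀ n : ℕ, 1 ≤ n → (2:ℝ) ^ (C * n) ≤ ct n) ∧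
    (∀ n : ℕ, 1 ≤ n →
      (c n : ℝ) ≤ 1 + 8 * (Real.log 2 * Real.logb 2 d) * n * (2:ℝ) ^ (C * n)) ∧
    Filter.Tendsto (fun n : ℕ => (n:ℝ)⁻¹ * Real.logb 2 (c n)) Filter.atTop (nhds C) ∧
    Filter.Tendsto (fun n : ℕ => (n:ℝ)⁻¹ * Real.logb 2 (ct n)) Filter.atTop (nhds C) := by
  have : NeZero d := ⟨by omega⟩
  have hF i := mem_Icc_zero_one_iff.2 (hE i)
  obtain ⟨P, ρ, L, h⟩ := exists_isSaddlePoint fun i => (hF i).1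
  simp only [← Complex.coe_algebraMap, algebraMap_smul] at hpos hC hct
  have hL : 0 < L := h.pos hP₀.1 hpos
  have hL₁ : L ≤ 1 := h.le_one fun i => (hF i).2
  obtain rfl : C = Real.logb 2 L⁻¹ := by
    rw [hC, (h.isGreatest_lamMin fun i => (hE i).1.isHermitian).csSup_eq, Real.logb_inv]
  have hpow (n : ℕ) : (2 : ℝ) ^ (Real.logb 2 L⁻¹ * n) = L⁻¹ ^ n := by
    rw [Real.rpow_mul_natCast zero_le_two,
      Real.rpow_logb two_pos (by norm_num) (by positivity)]
  have hct' (n : ℕ) : ct n = L⁻¹ ^ n :=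
    (hct n).trans (h.fractionalCoveringNumber_tpow (fun i => (hF i).1) hL n)
  obtain rfl : c = fun n => coveringNumber (tpow Ed n) := funext hc
  have hlog : Real.log 2 * Real.logb 2 d = Real.log d :=
    mul_div_cancel₀ _ (Real.log_pos one_lt_two).ne'
  simp only [hpow, hlog, hct']
  have hupper (n : ℕ) (hn : 1 ≤ n) := h.coveringNumber_tpow_le hF hL hd hn
  refine ⟨fun n _ => le_rfl, hupper, ?_, ?_⟩
  · exact tendsto_inv_mul_logb one_lt_two (one_le_inv₀ hL |>.2 hL₁) (by positivity)
      (h.inv_pow_le_coveringNumber_tpow hF hL) hupper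
  · refine tendsto_const_nhds.congr' ?_
    filter_upwards [Filter.eventually_ne_atTop 0] with n hn
    rw [Real.logb_pow, inv_mul_cancel_left₀ (Nat.cast_ne_zero.2 hn)]
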